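/- arXiv:1005.0681 — 2 statements merged into one kernel-verified Lean document; each statement's English description precedes it below -/
import Mathlib

section
/- Assume F satisfies Condition F2 (N₂ acts transitively on x̄, m ≥ 2), and let 𝒜 be the set of equivariant pointwise clutching maps with respect to F, with its natural topology. Then the map from the set π₀(𝒜) of path components of 𝒜 to ext_{N₁}^{N₂}(F_{x̄₀}), sending the class [ψ] to the isomorphism class of F/ψ, is a well-defined bijection. In particular, 𝒜 is nonempty if and only if the N₁-representation F_{x̄₀} admits an N₂-extension. -/
/-! A clutching map `ψ` is the same thing as an equivariant map `p : V → W` to a representation of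
`N₂` that is bijective on each fiber, taken up to isomorphism of `W`: from `ψ` one gets the quotient
map to `F/ψ` (`bijOn_mkQ`, `exists_quotRep`), and from `p` the clutching map
`(p|F (j+1))⁻¹ ∘ p|F j` (`exists_clutch_of_equivariant`).

*Surjectivity.* Given an extension `W` and an `N₁`-isomorphism `e : F 0 → W`, the maps
`g ∘ e ∘ g⁻¹ : F (g • 0) → W` depend only on `g • 0` and fit together to such a `p`
(`exists_clutch_of_extension`).

*Injectivity.* An isomorphism `F/ψ ≅ F/ψ'` lifts fiberwise to an equivariant automorphism `T` of
`F` with `ψ = T⁻¹ ψ' T` (`exists_conj_of_quotIso`).  The maps `1 + z (T - 1)`, `z ∈ ℂ`, are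
equivariant and preserve the fibers, and all but finitely many of them are invertible.  As the
complement of a finite set in `ℂ` is path connected, conjugating `ψ'` along a path of such `z`
from `1` to `0` joins `ψ` to `ψ'` (`joined_of_quotIso`).

*Well-definedness.* `N₂` may be infinite and its representations need not be semisimple, but two
extensions of the same `N₁`-representation are related by an intertwiner obtained by averaging over
the `m` cosets `N₂/N₁`.  In terms of the orbit sum `S = ∑_k ψ^k`, which is equivariant with kernel
the subspace divided out in `F/ψ`, it is induced by `S : V → V`; since `S² = m S`, it is
injective as soon as `‖S' - S‖ < m` (`quotIso_of_near`).  So the isomorphism class of `F/ψ` is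
locally constant along a path, hence constant (`quotIso_of_joined`). -/

/-! Setup: a group `N₂` acts on the finite set `x̄ = {x̄_j : j ∈ ℤ/m}`, modelled as a
`MulAction` of `N₂` on `ZMod m`.  An `N₂`-vector bundle `F` over `x̄` is modelled as a
finite-dimensional complex vector space `V` together with a representation
`ρ : N₂ →* End(V)` and a family of submodules `F j ⊆ V` (the fibers) forming an internal
direct sum decomposition of `V` with `ρ g (F j) = F (g • j)`.  A pointwise preclutching
map, i.e. a family of linear isomorphisms `ψ(x̄_j) : F j → F (j+1)`, is modelled as a
single continuous linear map `Ψ : V → V` restricting to a bijection `F j → F (j+1)` on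
each fiber.  For `u ∈ F j`, the iterate `ψ^k u` is then just `Ψ^k u`. -/

noncomputable section
open Function Set

namespace Clutch

variable {m : ℕ} {N₂ : Type*} [Group N₂] [MulAction N₂ (ZMod m)]
variable {V : Type*} [NormedAddCommGroup V] [NormedSpace ℂ V]

/-- `Ψ` is a pointwise preclutching map with respect to the fibers `F`:
for each `j ∈ ℤ/m` it restricts to a (linear) bijection `F j → F (j+1)`. -/
def IsPreclutch (F : ZMod m → Submodule ℂ V) (Ψ : V →L[ℂ] V) : Prop :=
  ∀ j : ZMod m, Set.BijOn Ψ (F j) (F (j + 1))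

/-- `Ψ` is an equivariant pointwise clutching map: it is a pointwise preclutching map
such that (1) `ψ^m = id` on each fiber `F j`, and (2) for every `g ∈ N₂` and `j₁ ∈ ℤ/m`,
writing `j₂ = g⁻¹ • j₁` and `j₃ = g • (j₂ + 1)`, one has
`ψ^(j₃ - j₁) = g ∘ ψ(x̄_{j₂}) ∘ g⁻¹` on `F j₁` (the exponent `j₃ - j₁ ∈ ℤ/m` is
interpreted via its canonical representative). -/
def IsClutch (ρ : Representation ℂ N₂ V) (F : ZMod m → Submodule ℂ V)
    (Ψ : V →L[ℂ] V) : Prop :=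
  IsPreclutch F Ψ ∧
  (∀ j : ZMod m, ∀ u ∈ F j, (Ψ ^ m) u = u) ∧
  (∀ (g : N₂) (j₁ : ZMod m), ∀ u ∈ F j₁,
    (Ψ ^ ((g • (g⁻¹ • j₁ + 1) - j₁ : ZMod m)).val) u = ρ g (Ψ (ρ g⁻¹ u)))

/-- The subspace of `V` spanned by all vectors `u - ψ(x̄_j) u`, `u ∈ F j`; the quotient
`F/ψ` is `V ⧸ clutchSub F Ψ`. -/
def clutchSub (F : ZMod m → Submodule ℂ V) (Ψ : V →L[ℂ] V) : Submodule ℂ V :=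
  Submodule.span ℂ {w : V | ∃ j : ZMod m, ∃ u ∈ F j, w = u - Ψ u}

/-- The quotients `F/ψ` and `F/ψ'` are isomorphic as `N₂`-representations (with respect
to the induced representations, whose action is characterized by commuting with the
quotient maps). -/
def QuotIso (ρ : Representation ℂ N₂ V) (F : ZMod m → Submodule ℂ V)
    (Ψ Ψ' : V →L[ℂ] V) : Prop :=
  ∃ θ : (V ⧸ clutchSub F Ψ) →ₗ[ℂ] (V ⧸ clutchSub F Ψ'),
    Function.Bijective θ ∧
    ∀ (g : N₂) (v w : V), θ ((clutchSub F Ψ).mkQ v) = (clutchSub F Ψ').mkQ w →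
      θ ((clutchSub F Ψ).mkQ (ρ g v)) = (clutchSub F Ψ').mkQ (ρ g w)

end Clutch

open Clutch

namespace Clutch

/-! ### Linear maps defined fiber by fiber -/

section FiberGluing

variable {m : ℕ} {V : Type*} [AddCommGroup V] [Module ℂ V]
  {F : ZMod m → Submodule ℂ V}

/-- A linear map out of `V = ⨁ F j` may be prescribed freely on each fiber. -/
lemma exists_glue (hF : DirectSum.IsInternal F) {X : Type*} [AddCommGroup X] [Module ℂ X]
    (f : ∀ j, F j →ₗ[ℂ] X) :
    ∃ L : V →ₗ[ℂ] X, ∀ j (u : V) (hu : u ∈ F j), L u = f j ⟨u, hu⟩ := by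
  classical
  let E := LinearEquiv.ofBijective (DirectSum.coeLinearMap F) hF
  refine ⟨DirectSum.toModule ℂ (ZMod m) X f ∘ₗ E.symm.toLinearMap, fun j u hu => ?_⟩
  have h : E.symm u = DirectSum.lof ℂ (ZMod m) (fun j => F j) j ⟨u, hu⟩ := by
    rw [LinearEquiv.symm_apply_eq]
    exact (DirectSum.coeLinearMap_lof F j ⟨u, hu⟩).symm
  simp [h]

lemma ext_fiber (hF : DirectSum.IsInternal F) {X : Type*} [AddCommGroup X] [Module ℂ X]
    {f g : V →ₗ[ℂ] X} (h : ∀ j, ∀ u ∈ F j, f u = g u) : f = g := by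
  have : (⊤ : Submodule ℂ V) ≤ LinearMap.eqLocus f g := by
    rw [← hF.submodule_iSup_eq_top]
    exact iSup_le fun j u hu => h j u hu
  ext v
  exact this (Submodule.mem_top (x := v))

lemma exists_section (j : ZMod m) {X : Type*} [AddCommGroup X] [Module ℂ X]
    {p : V →ₗ[ℂ] X} (hp : Set.BijOn p (F j) Set.univ) :
    ∃ s : X →ₗ[ℂ] V, ∀ x, s x ∈ F j ∧ p (s x) = x := by
  have hb : Function.Bijective (p.domRestrict (F j)) := by
    constructor
    · rintro ⟨u, hu⟩ ⟨v, hv⟩ h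
      exact Subtype.ext (hp.injOn hu hv h)
    · intro x
      obtain ⟨u, hu, rfl⟩ := hp.surjOn (Set.mem_univ x)
      exact ⟨⟨u, hu⟩, rfl⟩
  let E := LinearEquiv.ofBijective _ hb
  exact ⟨(F j).subtype ∘ₗ E.symm.toLinearMap,
    fun x => ⟨(E.symm x).2, E.apply_symm_apply x⟩⟩

end FiberGluing

/-! ### The orbit sum and the quotient `F/ψ` -/

section Clutching

set_option linter.unusedSectionVars false

variable {m : ℕ} [NeZero m] {N₂ : Type*} [Group N₂] [MulAction N₂ (ZMod m)]
  {V : Type*} [NormedAddCommGroup V] [NormedSpace ℂ V] [FiniteDimensional ℂ V]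
  {ρ : Representation ℂ N₂ V} {F : ZMod m → Submodule ℂ V}

lemma rho_mem (hρF : ∀ (g : N₂) (j : ZMod m), (F j).map (ρ g) = F (g • j))
    (g : N₂) {j : ZMod m} {u : V} (hu : u ∈ F j) : ρ g u ∈ F (g • j) := by
  rw [← hρF]
  exact Submodule.mem_map_of_mem hu

lemma rho_inv (g : N₂) (v : V) : ρ g⁻¹ (ρ g v) = v := by
  rw [← Module.End.mul_apply, ← map_mul]
  simp

lemma rho_inv' (g : N₂) (v : V) : ρ g (ρ g⁻¹ v) = v := by
  rw [← Module.End.mul_apply, ← map_mul]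
  simp

/-- The orbit sum `v ↦ ∑_k ψ^k v`, the exponents running over canonical representatives of `ℤ/m`.
For a clutching map its value at `v` is the sum, over all fibers, of the representatives of the
class of `v` in `F/ψ`; this makes it an equivariant model of the quotient map `V → F/ψ`. -/
def orbitSum (m : ℕ) [NeZero m] (Ψ : V →L[ℂ] V) : V →L[ℂ] V :=
  ∑ k : ZMod m, Ψ ^ k.val

lemma pow_mem {Ψ : V →L[ℂ] V} (h : IsPreclutch F Ψ) {j : ZMod m} {u : V} (hu : u ∈ F j)
    (n : ℕ) : (Ψ ^ n) u ∈ F (j + n) := by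
  induction n with
  | zero => simpa using hu
  | succ n ih =>
    rw [pow_succ', mul_apply_eq_comp, Nat.cast_succ, ← add_assoc]
    exact (h _).mapsTo ih

lemma IsClutch.pow_eq_one (hF : DirectSum.IsInternal F) {Ψ : V →L[ℂ] V}
    (h : IsClutch ρ F Ψ) : Ψ ^ m = 1 := by
  have : ((Ψ ^ m : V →L[ℂ] V) : V →ₗ[ℂ] V) = LinearMap.id :=
    ext_fiber hF fun j u hu => h.2.1 j u hu
  ext v
  exact LinearMap.congr_fun this v

lemma pow_val_add {Ψ : V →L[ℂ] V} (h : Ψ ^ m = 1) (a b : ZMod m) :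
    Ψ ^ (a + b).val = Ψ ^ a.val * Ψ ^ b.val := by
  rw [← pow_add, ZMod.val_add, ← pow_eq_pow_mod _ h]

lemma pow_val_one {Ψ : V →L[ℂ] V} (h : Ψ ^ m = 1) : Ψ ^ (1 : ZMod m).val = Ψ := by
  have h1 : (1 : ZMod m).val = 1 % m := by
    rw [← ZMod.val_natCast, Nat.cast_one]
  rw [h1, ← pow_eq_pow_mod _ h, pow_one]

lemma orbitSum_mul_pow {Ψ : V →L[ℂ] V} (h : Ψ ^ m = 1) (a : ZMod m) :
    orbitSum m Ψ * Ψ ^ a.val = orbitSum m Ψ := by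
  rw [orbitSum, Finset.sum_mul]
  simp_rw [← pow_val_add h]
  exact Fintype.sum_equiv (Equiv.addRight a) _ _ fun k => rfl

lemma orbitSum_apply_self {Ψ : V →L[ℂ] V} (h : Ψ ^ m = 1) (v : V) :
    orbitSum m Ψ (Ψ v) = orbitSum m Ψ v := by
  have := orbitSum_mul_pow h 1
  rw [pow_val_one h] at this
  exact DFunLike.congr_fun this v

lemma orbitSum_sq {Ψ : V →L[ℂ] V} (h : Ψ ^ m = 1) (v : V) :
    orbitSum m Ψ (orbitSum m Ψ v) = (m : ℂ) • orbitSum m Ψ v := by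
  have h1 : orbitSum m Ψ * orbitSum m Ψ = (m : ℂ) • orbitSum m Ψ := by
    conv_lhs => rw [orbitSum.eq_def (m := m) (Ψ := Ψ), Finset.mul_sum]
    rw [← orbitSum]
    simp_rw [orbitSum_mul_pow h]
    simp [ZMod.card, Nat.cast_smul_eq_nsmul]
  exact DFunLike.congr_fun h1 v

lemma sub_self_mem (hF : DirectSum.IsInternal F) (Ψ : V →L[ℂ] V) (v : V) :
    v - Ψ v ∈ clutchSub F Ψ := by
  have : (clutchSub F Ψ).mkQ = (clutchSub F Ψ).mkQ ∘ₗ (Ψ : V →ₗ[ℂ] V) := by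
    refine ext_fiber hF fun j u hu => ?_
    exact (Submodule.Quotient.eq _).2 (Submodule.subset_span ⟨j, u, hu, rfl⟩)
  exact (Submodule.Quotient.eq _).1 (LinearMap.congr_fun this v)

lemma sub_pow_mem (hF : DirectSum.IsInternal F) (Ψ : V →L[ℂ] V) (v : V) (n : ℕ) :
    v - (Ψ ^ n) v ∈ clutchSub F Ψ := by
  induction n with
  | zero => simp
  | succ n ih =>
    have := add_mem ih (sub_self_mem hF Ψ ((Ψ ^ n) v))
    rw [pow_succ', mul_apply_eq_comp]
    simpa using this

/-- The subspace divided out in `F/ψ` is the kernel of the orbit sum: modulo that subspace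
`v` equals its average `(1/m) ∑_k ψ^k v`. -/
lemma mem_clutchSub_iff (hF : DirectSum.IsInternal F) {Ψ : V →L[ℂ] V} (h : Ψ ^ m = 1) (v : V) :
    v ∈ clutchSub F Ψ ↔ orbitSum m Ψ v = 0 := by
  constructor
  · intro hv
    have : clutchSub F Ψ ≤ LinearMap.ker (orbitSum m Ψ : V →ₗ[ℂ] V) := by
      refine Submodule.span_le.2 ?_
      rintro _ ⟨j, u, -, rfl⟩
      simp [orbitSum_apply_self h]
    exact this hv
  · intro hv
    have h1 : ∑ k : ZMod m, (v - (Ψ ^ k.val) v) ∈ clutchSub F Ψ :=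
      sum_mem fun k _ => sub_pow_mem hF Ψ v _
    have h2 : ∑ k : ZMod m, (v - (Ψ ^ k.val) v) = (m : ℂ) • v := by
      have : ∑ k : ZMod m, (Ψ ^ k.val) v = 0 := by
        simpa [orbitSum, sum_apply] using hv
      rw [Finset.sum_sub_distrib, this]
      simp [ZMod.card, Nat.cast_smul_eq_nsmul]
    rw [h2] at h1
    exact (Submodule.smul_mem_iff _ (Nat.cast_ne_zero.2 (NeZero.ne m))).1 h1

/-- Condition (2) of a clutching map, iterated: `g` carries the `ψ`-orbit of `u` to that of
`g u`, reindexing the fibers by the action on `ℤ/m`. -/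
lemma rho_pow (hF : DirectSum.IsInternal F)
    (hρF : ∀ (g : N₂) (j : ZMod m), (F j).map (ρ g) = F (g • j))
    {Ψ : V →L[ℂ] V} (h : IsClutch ρ F Ψ) (g : N₂) {i : ZMod m} {u : V} (hu : u ∈ F i) (n : ℕ) :
    ρ g ((Ψ ^ n) u) = (Ψ ^ (g • (i + (n : ZMod m)) - g • i : ZMod m).val) (ρ g u) := by
  have h1 := h.pow_eq_one hF
  induction n with
  | zero => simp
  | succ n ih =>
    have hw := pow_mem h.1 hu n
    have h2 := h.2.2 g (g • (i + (n : ZMod m))) _ (rho_mem hρF g hw)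
    rw [inv_smul_smul, rho_inv] at h2
    rw [pow_succ', mul_apply_eq_comp, ← h2, ih, ← mul_apply_eq_comp,
      ← pow_val_add h1, Nat.cast_succ, ← add_assoc, sub_add_sub_cancel]

lemma rho_orbitSum (hF : DirectSum.IsInternal F)
    (hρF : ∀ (g : N₂) (j : ZMod m), (F j).map (ρ g) = F (g • j))
    {Ψ : V →L[ℂ] V} (h : IsClutch ρ F Ψ) (g : N₂) (v : V) :
    ρ g (orbitSum m Ψ v) = orbitSum m Ψ (ρ g v) := by
  have : ρ g ∘ₗ (orbitSum m Ψ : V →ₗ[ℂ] V) = (orbitSum m Ψ : V →ₗ[ℂ] V) ∘ₗ ρ g := by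
    refine ext_fiber hF fun i u hu => ?_
    simp only [LinearMap.comp_apply, ContinuousLinearMap.coe_coe, orbitSum,
      sum_apply, map_sum]
    refine Fintype.sum_equiv (((Equiv.addLeft i).trans (MulAction.toPerm g)).trans
      (Equiv.subRight (g • i))) _ _ fun k => ?_
    rw [rho_pow hF hρF h g hu, ZMod.natCast_zmod_val]
    rfl
  exact LinearMap.congr_fun this v

lemma rho_clutchSub (hF : DirectSum.IsInternal F)
    (hρF : ∀ (g : N₂) (j : ZMod m), (F j).map (ρ g) = F (g • j))
    {Ψ : V →L[ℂ] V} (h : IsClutch ρ F Ψ) (g : N₂) {v : V} (hv : v ∈ clutchSub F Ψ) :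
    ρ g v ∈ clutchSub F Ψ := by
  have h1 := h.pow_eq_one hF
  rw [mem_clutchSub_iff hF h1] at hv ⊢
  rw [← rho_orbitSum hF hρF h, hv, map_zero]

/-- Each fiber maps isomorphically onto `F/ψ`.  Injectivity: `u ∈ F j` is the `F j`-component
of its orbit sum. -/
lemma bijOn_mkQ (hF : DirectSum.IsInternal F) {Ψ : V →L[ℂ] V} (h : IsClutch ρ F Ψ)
    (j : ZMod m) : Set.BijOn (clutchSub F Ψ).mkQ (F j) Set.univ := by
  have h1 := h.pow_eq_one hF
  refine ⟨Set.mapsTo_univ _ _, ?_, ?_⟩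
  · intro u hu u' hu' huu
    have h2 : u - u' ∈ clutchSub F Ψ := (Submodule.Quotient.eq _).1 huu
    rw [mem_clutchSub_iff hF h1, orbitSum, sum_apply] at h2
    have h3 := (iSupIndep_iff_finsetSum_eq_zero_imp_eq_zero F).1 hF.submodule_iSupIndep
      Finset.univ (fun i => (Ψ ^ (i - j).val) (u - u')) (fun i _ => by
        have := pow_mem h.1 (sub_mem hu hu') (i - j).val
        rwa [ZMod.natCast_zmod_val, add_sub_cancel] at this) (by
        rw [← h2]
        exact Fintype.sum_equiv (Equiv.subRight j) _ _ fun k => rfl) j (Finset.mem_univ j)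
    exact sub_eq_zero.1 (by simpa using h3)
  · have h2 : (⊤ : Submodule ℂ V) ≤ ((F j).map (clutchSub F Ψ).mkQ).comap
        (clutchSub F Ψ).mkQ := by
      rw [← hF.submodule_iSup_eq_top]
      refine iSup_le fun i u hu => ?_
      refine ⟨(Ψ ^ (j - i).val) u, ?_, ?_⟩
      · have := pow_mem h.1 hu (j - i).val
        rwa [ZMod.natCast_zmod_val, add_sub_cancel] at this
      · exact ((Submodule.Quotient.eq _).2 (sub_pow_mem hF Ψ u _)).symm
    intro x _
    obtain ⟨v, rfl⟩ := Submodule.mkQ_surjective _ x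
    exact h2 (Submodule.mem_top (x := v))

lemma finrank_quot (hF : DirectSum.IsInternal F) {Ψ : V →L[ℂ] V} (h : IsClutch ρ F Ψ) :
    Module.finrank ℂ (V ⧸ clutchSub F Ψ) = Module.finrank ℂ (F 0) := by
  have hb := bijOn_mkQ hF h 0
  have : Function.Bijective ((clutchSub F Ψ).mkQ.domRestrict (F 0)) := by
    constructor
    · rintro ⟨u, hu⟩ ⟨v, hv⟩ h
      exact Subtype.ext (hb.injOn hu hv h)
    · intro x
      obtain ⟨u, hu, rfl⟩ := hb.surjOn (Set.mem_univ x)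
      exact ⟨⟨u, hu⟩, rfl⟩
  exact (LinearEquiv.ofBijective _ this).finrank_eq.symm

lemma exists_quotRep (hF : DirectSum.IsInternal F)
    (hρF : ∀ (g : N₂) (j : ZMod m), (F j).map (ρ g) = F (g • j))
    {Ψ : V →L[ℂ] V} (h : IsClutch ρ F Ψ) :
    ∃ σQ : Representation ℂ N₂ (V ⧸ clutchSub F Ψ), ∀ (g : N₂) (v : V),
      σQ g ((clutchSub F Ψ).mkQ v) = (clutchSub F Ψ).mkQ (ρ g v) := by
  refine ⟨{ toFun := fun g => (clutchSub F Ψ).mapQ (clutchSub F Ψ) (ρ g)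
              fun v hv => rho_clutchSub hF hρF h g hv
            map_one' := ?_
            map_mul' := ?_ }, fun g v => rfl⟩
  · ext v
    simp
  · intro g g'
    ext v
    simp

/-! ### Equivariant maps that trivialize every fiber -/

/-- An equivariant linear map `p : V → W` that is bijective on every fiber comes from a clutching
map: `ψ(x̄_j)` is the composite `F j → W → F (j+1)` of `p` and its fiberwise inverse, and then
`W` is the quotient `F/ψ`. -/
lemma exists_clutch_of_equivariant (hF : DirectSum.IsInternal F)
    (hρF : ∀ (g : N₂) (j : ZMod m), (F j).map (ρ g) = F (g • j))
    {W : Type*} [AddCommGroup W] [Module ℂ W] (σ : Representation ℂ N₂ W) (p : V →ₗ[ℂ] W)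
    (hp : ∀ j, Set.BijOn p (F j) Set.univ) (hpe : ∀ g v, p (ρ g v) = σ g (p v)) :
    ∃ Ψ : V →L[ℂ] V, IsClutch ρ F Ψ ∧ ∀ v, p (Ψ v) = p v := by
  choose s hs using fun j => exists_section (F := F) j (hp j)
  obtain ⟨L, hL⟩ := exists_glue hF fun j => (s (j + 1) ∘ₗ p) ∘ₗ (F j).subtype
  let Ψ : V →L[ℂ] V := LinearMap.toContinuousLinearMap L
  have hΨL : ∀ j, ∀ u ∈ F j, Ψ u = s (j + 1) (p u) := fun j u hu => hL j u hu
  have hpΨ : ∀ v, p (Ψ v) = p v := by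
    have : p ∘ₗ (Ψ : V →ₗ[ℂ] V) = p := ext_fiber hF fun j u hu => by
      simp [hΨL j u hu, (hs _ _).2]
    exact fun v => LinearMap.congr_fun this v
  have hpow : ∀ (n : ℕ) v, p ((Ψ ^ n) v) = p v := by
    intro n
    induction n with
    | zero => simp
    | succ n ih =>
      intro v
      rw [pow_succ', mul_apply_eq_comp, hpΨ, ih]
  have hpre : IsPreclutch F Ψ := by
    intro j
    have hmaps : Set.MapsTo Ψ (F j) (F (j + 1)) := fun u hu => by
      rw [hΨL j u hu]
      exact (hs _ _).1
    refine ⟨hmaps, fun u hu v hv huv => (hp j).injOn hu hv ?_, fun w hw => ?_⟩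
    · rw [← hpΨ u, ← hpΨ v, huv]
    · refine ⟨s j (p w), (hs _ _).1, (hp (j + 1)).injOn (hmaps (hs _ _).1) hw ?_⟩
      rw [hpΨ, (hs _ _).2]
  refine ⟨Ψ, ⟨hpre, fun j u hu => (hp j).injOn ?_ hu (hpow _ _), fun g j u hu =>
    (hp (g • (g⁻¹ • j + 1))).injOn ?_ ?_ ?_⟩, hpΨ⟩
  · simpa using pow_mem hpre hu m
  · simpa using pow_mem hpre hu (g • (g⁻¹ • j + 1) - j : ZMod m).val
  · exact rho_mem hρF g ((hpre _).mapsTo (rho_mem hρF g⁻¹ hu))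
  · rw [hpow, hpe, hpΨ, ← hpe, rho_inv']

/-- Every extension `W` of the `N₁`-representation `F 0` is `F/ψ` for some `ψ`: transporting the
isomorphism `e : F 0 → W` around by `N₂` produces an equivariant map `V → W`. -/
lemma exists_clutch_of_extension (hF : DirectSum.IsInternal F)
    (hρF : ∀ (g : N₂) (j : ZMod m), (F j).map (ρ g) = F (g • j))
    (htrans : MulAction.IsPretransitive N₂ (ZMod m))
    {W : Type*} [AddCommGroup W] [Module ℂ W] (σ : Representation ℂ N₂ W) (e : V →ₗ[ℂ] W)
    (he : Set.BijOn e (F (0 : ZMod m)) Set.univ)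
    (hee : ∀ g ∈ MulAction.stabilizer N₂ (0 : ZMod m), ∀ u ∈ F (0 : ZMod m),
      e (ρ g u) = σ g (e u)) :
    ∃ Ψ : V →L[ℂ] V, IsClutch ρ F Ψ ∧
      ∃ σQ : Representation ℂ N₂ (V ⧸ clutchSub F Ψ),
        (∀ (g : N₂) (v : V),
          σQ g ((clutchSub F Ψ).mkQ v) = (clutchSub F Ψ).mkQ (ρ g v)) ∧
        ∃ θ : W →ₗ[ℂ] V ⧸ clutchSub F Ψ, Function.Bijective θ ∧
          ∀ (g : N₂) (w : W), θ (σ g w) = σQ g (θ w) := by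
  choose a ha using fun j : ZMod m => htrans.exists_smul_eq 0 j
  have ha' : ∀ j, (a j)⁻¹ • j = 0 := fun j => by rw [inv_smul_eq_iff, ha]
  have hσ : ∀ (g h : N₂) (w : W), σ (g * h) w = σ g (σ h w) := fun g h w => by
    rw [map_mul, Module.End.mul_apply]
  have hρ : ∀ (g h : N₂) (v : V), ρ (g * h) v = ρ g (ρ h v) := fun g h w => by
    rw [map_mul, Module.End.mul_apply]
  have hinv : ∀ (j : ZMod m) {u : V}, u ∈ F j → ρ (a j)⁻¹ u ∈ F 0 := fun j u hu => by
    have := rho_mem hρF (a j)⁻¹ hu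
    rwa [ha'] at this
  obtain ⟨p, hp⟩ := exists_glue hF fun j => (σ (a j) ∘ₗ e ∘ₗ ρ (a j)⁻¹) ∘ₗ (F j).subtype
  replace hp : ∀ j, ∀ u ∈ F j, p u = σ (a j) (e (ρ (a j)⁻¹ u)) := fun j u hu => hp j u hu
  have hpe : ∀ g v, p (ρ g v) = σ g (p v) := by
    intro g
    have : p ∘ₗ ρ g = σ g ∘ₗ p := by
      refine ext_fiber hF fun j u hu => ?_
      have hn : (a (g • j))⁻¹ * g * a j ∈ MulAction.stabilizer N₂ (0 : ZMod m) := by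
        rw [MulAction.mem_stabilizer_iff, mul_smul, mul_smul, ha, ha']
      have h1 := hee _ hn _ (hinv j hu)
      rw [← hρ, mul_inv_cancel_right] at h1
      simp only [LinearMap.comp_apply]
      rw [hp _ _ (rho_mem hρF g hu), hp _ _ hu, ← hρ, h1, ← hσ, ← hσ]
      congr 2
      group
    exact fun v => LinearMap.congr_fun this v
  have hpb : ∀ j, Set.BijOn p (F j) Set.univ := by
    intro j
    refine ⟨Set.mapsTo_univ _ _, fun u hu v hv huv => ?_, fun w _ => ?_⟩
    · rw [hp j u hu, hp j v hv] at huv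
      have h1 := congrArg (σ (a j)⁻¹) huv
      rw [← hσ, ← hσ, inv_mul_cancel, map_one] at h1
      have h2 := he.injOn (hinv j hu) (hinv j hv) h1
      rw [← rho_inv' (ρ := ρ) (a j) u, h2, rho_inv']
    · obtain ⟨u, hu, hue⟩ := he.surjOn (Set.mem_univ (σ (a j)⁻¹ w))
      have hu' : ρ (a j) u ∈ F j := by
        have := rho_mem hρF (a j) hu
        rwa [ha] at this
      refine ⟨ρ (a j) u, hu', ?_⟩
      rw [hp j _ hu', rho_inv, hue, ← hσ, mul_inv_cancel, map_one]
      rfl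
  obtain ⟨Ψ, hΨ, hpΨ⟩ := exists_clutch_of_equivariant hF hρF σ p hpb hpe
  obtain ⟨σQ, hσQ⟩ := exists_quotRep hF hρF hΨ
  refine ⟨Ψ, hΨ, σQ, hσQ, ?_⟩
  have hker : clutchSub F Ψ ≤ LinearMap.ker p := by
    refine Submodule.span_le.2 ?_
    rintro _ ⟨j, u, -, rfl⟩
    simp [hpΨ]
  have hb : Function.Bijective ((clutchSub F Ψ).liftQ p hker) := by
    constructor
    · intro x y hxy
      obtain ⟨u, hu, rfl⟩ := (bijOn_mkQ hF hΨ 0).surjOn (Set.mem_univ x)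
      obtain ⟨v, hv, rfl⟩ := (bijOn_mkQ hF hΨ 0).surjOn (Set.mem_univ y)
      rw [(hpb 0).injOn hu hv (by simpa using hxy)]
    · intro w
      obtain ⟨u, -, rfl⟩ := (hpb 0).surjOn (Set.mem_univ w)
      exact ⟨(clutchSub F Ψ).mkQ u, by simp⟩
  let E := LinearEquiv.ofBijective _ hb
  have hE : ∀ v, E.symm (p v) = (clutchSub F Ψ).mkQ v := fun v => by
    rw [LinearEquiv.symm_apply_eq]
    simp [E]
  refine ⟨E.symm.toLinearMap, E.symm.bijective, fun g w => ?_⟩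
  obtain ⟨v, -, rfl⟩ := (hpb 0).surjOn (Set.mem_univ w)
  simp only [LinearEquiv.coe_coe]
  rw [← hpe, hE, hE, hσQ]

/-! ### Path-connected clutching maps have isomorphic quotients -/

/-- Averaging `m⁻¹ ∑_j (F j → F/ψ')(F j → F/ψ)⁻¹` over the fibers gives an intertwiner
`F/ψ → F/ψ'`, here written through orbit sums.  It is invertible once the orbit sums of `ψ` and
`ψ'` differ by less than `m` in norm. -/
lemma quotIso_of_near (hF : DirectSum.IsInternal F)
    (hρF : ∀ (g : N₂) (j : ZMod m), (F j).map (ρ g) = F (g • j))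
    {Ψ Ψ' : V →L[ℂ] V} (h : IsClutch ρ F Ψ) (h' : IsClutch ρ F Ψ')
    (hn : ‖orbitSum m Ψ' - orbitSum m Ψ‖ < m) : QuotIso ρ F Ψ Ψ' := by
  have h1 := h.pow_eq_one hF
  have h1' := h'.pow_eq_one hF
  have hker : clutchSub F Ψ ≤
      LinearMap.ker ((clutchSub F Ψ').mkQ ∘ₗ (orbitSum m Ψ : V →ₗ[ℂ] V)) := by
    intro v hv
    rw [mem_clutchSub_iff hF h1] at hv
    simp [hv]
  let θ := (clutchSub F Ψ).liftQ _ hker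
  have hθ : ∀ v, θ ((clutchSub F Ψ).mkQ v) = (clutchSub F Ψ').mkQ (orbitSum m Ψ v) :=
    fun v => rfl
  have hinj : Function.Injective θ := by
    rw [injective_iff_map_eq_zero]
    intro x hx
    obtain ⟨v, rfl⟩ := Submodule.mkQ_surjective _ x
    rw [hθ, Submodule.mkQ_apply, Submodule.Quotient.mk_eq_zero, mem_clutchSub_iff hF h1'] at hx
    rw [Submodule.mkQ_apply, Submodule.Quotient.mk_eq_zero, mem_clutchSub_iff hF h1]
    set y := orbitSum m Ψ v with hy
    have h2 : (orbitSum m Ψ' - orbitSum m Ψ) y = -((m : ℂ) • y) := by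
      rw [sub_apply, hx, hy, orbitSum_sq h1, zero_sub]
    have h3 := (orbitSum m Ψ' - orbitSum m Ψ).le_opNorm y
    rw [h2, norm_neg, norm_smul, Complex.norm_natCast] at h3
    by_contra hne
    exact absurd (mul_lt_mul_of_pos_right hn (norm_pos_iff.2 hne)) (not_lt.2 h3)
  refine ⟨θ, ⟨hinj, ?_⟩, fun g v w hvw => ?_⟩
  · exact (LinearMap.injective_iff_surjective_of_finrank_eq_finrank
      ((finrank_quot hF h).trans (finrank_quot hF h').symm)).1 hinj
  · rw [hθ] at hvw ⊢
    have h2 := rho_clutchSub hF hρF h' g ((Submodule.Quotient.eq _).1 hvw)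
    rw [map_sub, rho_orbitSum hF hρF h] at h2
    exact (Submodule.Quotient.eq _).2 h2

lemma QuotIso.trans {Ψ₁ Ψ₂ Ψ₃ : V →L[ℂ] V} (h : QuotIso ρ F Ψ₁ Ψ₂) (h' : QuotIso ρ F Ψ₂ Ψ₃) :
    QuotIso ρ F Ψ₁ Ψ₃ := by
  obtain ⟨θ, hb, he⟩ := h
  obtain ⟨θ', hb', he'⟩ := h'
  refine ⟨θ' ∘ₗ θ, hb'.comp hb, fun g v w hvw => ?_⟩
  obtain ⟨x, hx⟩ := Submodule.mkQ_surjective _ (θ ((clutchSub F Ψ₁).mkQ v))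
  rw [LinearMap.comp_apply, ← hx] at hvw
  rw [LinearMap.comp_apply, he g v x hx.symm]
  exact he' g x w hvw

lemma quotIso_of_joined (hF : DirectSum.IsInternal F)
    (hρF : ∀ (g : N₂) (j : ZMod m), (F j).map (ρ g) = F (g • j))
    {Ψ Ψ' : {Ψ : V →L[ℂ] V // IsClutch ρ F Ψ}} (h : Joined Ψ Ψ') :
    QuotIso ρ F Ψ.1 Ψ'.1 := by
  obtain ⟨γ⟩ := h
  have hc : Continuous fun t => orbitSum m (γ t).1 := by
    unfold orbitSum
    fun_prop
  have key := PreconnectedSpace.induction₂' (fun s t => QuotIso ρ F (γ s).1 (γ t).1)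
    (fun s => ?_) ⟨fun _ _ _ => QuotIso.trans⟩ 0 1
  · simpa using key
  · have hm : (0 : ℝ) < m := Nat.cast_pos.2 (Nat.pos_of_ne_zero (NeZero.ne m))
    filter_upwards [Metric.continuous_iff'.1 hc s m hm] with t ht
    rw [dist_eq_norm] at ht
    exact ⟨quotIso_of_near hF hρF (γ s).2 (γ t).2 ht,
      quotIso_of_near hF hρF (γ t).2 (γ s).2 (by rwa [norm_sub_rev])⟩

/-! ### Isomorphic quotients are joined by a path -/

/-- An isomorphism `F/ψ ≅ F/ψ'` lifts to an equivariant, fiber-preserving automorphism of `F`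
that conjugates `ψ` to `ψ'`. -/
lemma exists_conj_of_quotIso (hF : DirectSum.IsInternal F)
    (hρF : ∀ (g : N₂) (j : ZMod m), (F j).map (ρ g) = F (g • j))
    {Ψ Ψ' : V →L[ℂ] V} (h : IsClutch ρ F Ψ) (h' : IsClutch ρ F Ψ') (hq : QuotIso ρ F Ψ Ψ') :
    ∃ T : V →L[ℂ] V, IsUnit T ∧ (∀ g v, T (ρ g v) = ρ g (T v)) ∧
      (∀ j, ∀ u ∈ F j, T u ∈ F j) ∧ Ψ' * T = T * Ψ := by
  obtain ⟨θ, hb, he⟩ := hq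
  have hQ' := bijOn_mkQ hF h'
  choose s hs using fun j => exists_section (F := F) j (hQ' j)
  obtain ⟨L, hL⟩ := exists_glue hF fun j =>
    (s j ∘ₗ θ ∘ₗ (clutchSub F Ψ).mkQ) ∘ₗ (F j).subtype
  let T : V →L[ℂ] V := LinearMap.toContinuousLinearMap L
  replace hL : ∀ j, ∀ u ∈ F j, T u = s j (θ ((clutchSub F Ψ).mkQ u)) := fun j u hu => hL j u hu
  have hTF : ∀ j, ∀ u ∈ F j, T u ∈ F j := fun j u hu => by
    rw [hL j u hu]
    exact (hs _ _).1
  have hTQ : ∀ v, (clutchSub F Ψ').mkQ (T v) = θ ((clutchSub F Ψ).mkQ v) := by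
    have : (clutchSub F Ψ').mkQ ∘ₗ (T : V →ₗ[ℂ] V) = θ ∘ₗ (clutchSub F Ψ).mkQ :=
      ext_fiber hF fun j u hu => by
        simp only [LinearMap.comp_apply, ContinuousLinearMap.coe_coe]
        rw [hL j u hu, (hs _ _).2]
    exact fun v => LinearMap.congr_fun this v
  refine ⟨T, ?_, fun g => ?_, hTF, ?_⟩
  · have hsurj : Function.Surjective (T : V →ₗ[ℂ] V) := by
      rw [← LinearMap.range_eq_top, eq_top_iff, ← hF.submodule_iSup_eq_top]
      refine iSup_le fun j w hw => ?_
      obtain ⟨x, hx⟩ := hb.2 ((clutchSub F Ψ').mkQ w)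
      obtain ⟨u, hu, rfl⟩ := (bijOn_mkQ hF h j).surjOn (Set.mem_univ x)
      refine ⟨u, (hQ' j).injOn (hTF j u hu) hw ?_⟩
      rw [← hx]
      exact hTQ u
    have hu : IsUnit (T : V →ₗ[ℂ] V) := by
      rw [Module.End.isUnit_iff]
      exact ⟨LinearMap.injective_iff_surjective.2 hsurj, hsurj⟩
    exact hu.map (Module.End.toContinuousLinearMap V)
  · have : (T : V →ₗ[ℂ] V) ∘ₗ ρ g = ρ g ∘ₗ (T : V →ₗ[ℂ] V) := by
      refine ext_fiber hF fun j u hu => ?_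
      simp only [LinearMap.comp_apply, ContinuousLinearMap.coe_coe]
      refine (hQ' (g • j)).injOn (hTF _ _ (rho_mem hρF g hu))
        (rho_mem hρF g (hTF _ _ hu)) ?_
      rw [hTQ]
      exact he g u (T u) (hTQ u).symm
    exact fun v => LinearMap.congr_fun this v
  · have : (Ψ' : V →ₗ[ℂ] V) ∘ₗ (T : V →ₗ[ℂ] V) = (T : V →ₗ[ℂ] V) ∘ₗ (Ψ : V →ₗ[ℂ] V) := by
      refine ext_fiber hF fun j u hu => ?_
      simp only [LinearMap.comp_apply, ContinuousLinearMap.coe_coe]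
      refine (hQ' (j + 1)).injOn ((h'.1 j).mapsTo (hTF _ _ hu))
        (hTF _ _ ((h.1 j).mapsTo hu)) ?_
      have h2 : (clutchSub F Ψ').mkQ (Ψ' (T u)) = (clutchSub F Ψ').mkQ (T u) :=
        ((Submodule.Quotient.eq _).2 (sub_self_mem hF Ψ' (T u))).symm
      have h3 : (clutchSub F Ψ).mkQ (Ψ u) = (clutchSub F Ψ).mkQ u :=
        ((Submodule.Quotient.eq _).2 (sub_self_mem hF Ψ u)).symm
      rw [h2, hTQ, hTQ, h3]
    ext v
    exact LinearMap.congr_fun this v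

lemma IsClutch.conj {Ψ : V →L[ℂ] V} (h : IsClutch ρ F Ψ) (U : (V →L[ℂ] V)ˣ)
    (hUρ : ∀ g v, U.1 (ρ g v) = ρ g (U.1 v)) (hUF : ∀ j, ∀ u ∈ F j, U.1 u ∈ F j) :
    IsClutch ρ F ((U⁻¹).1 * Ψ * U.1) := by
  have hl : ∀ v, (U⁻¹).1 (U.1 v) = v := fun v => by
    rw [← mul_apply_eq_comp, Units.inv_mul, one_apply_eq_self]
  have hr : ∀ v, U.1 ((U⁻¹).1 v) = v := fun v => by
    rw [← mul_apply_eq_comp, Units.mul_inv, one_apply_eq_self]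
  have hUinj : Function.Injective U.1 := Function.LeftInverse.injective hl
  -- a fiber is finite-dimensional, so `U` maps it onto itself
  have hUF' : ∀ j, ∀ u ∈ F j, (U⁻¹).1 u ∈ F j := by
    intro j u hu
    have hmap : (F j).map (U.1 : V →ₗ[ℂ] V) = F j := by
      refine Submodule.eq_of_le_of_finrank_eq (Submodule.map_le_iff_le_comap.2 (hUF j)) ?_
      exact (Submodule.equivMapOfInjective (U.1 : V →ₗ[ℂ] V) hUinj (F j)).finrank_eq.symm
    rw [← hmap] at hu
    obtain ⟨w, hw, rfl⟩ := hu
    rw [ContinuousLinearMap.coe_coe, hl]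
    exact hw
  have hUρ' : ∀ g v, (U⁻¹).1 (ρ g v) = ρ g ((U⁻¹).1 v) := fun g v => by
    apply hUinj
    rw [hr, hUρ, hr]
  have hpow : ∀ (n : ℕ) v, (((U⁻¹).1 * Ψ * U.1) ^ n) v = (U⁻¹).1 ((Ψ ^ n) (U.1 v)) := by
    intro n v
    rw [Units.conj_pow']
    rfl
  refine ⟨fun j => ⟨fun u hu => hUF' _ _ ((h.1 j).mapsTo (hUF _ _ hu)), ?_, ?_⟩, ?_, ?_⟩
  · intro u hu v hv huv
    have h2 := congrArg U.1 huv
    simp only [mul_apply_eq_comp, hr] at h2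
    exact hUinj ((h.1 j).injOn (hUF _ _ hu) (hUF _ _ hv) h2)
  · intro w hw
    obtain ⟨u, hu, huw⟩ := (h.1 j).surjOn (hUF _ _ hw)
    refine ⟨(U⁻¹).1 u, hUF' _ _ hu, ?_⟩
    simp only [mul_apply_eq_comp, hr]
    rw [huw, hl]
  · intro j u hu
    rw [hpow, h.2.1 j _ (hUF _ _ hu), hl]
  · intro g j u hu
    rw [hpow, h.2.2 g j _ (hUF _ _ hu), hUρ']
    simp only [mul_apply_eq_comp]
    rw [hUρ]

/-- The invertible members of a complex line `1 + z (T - 1)` omit only finitely many `z`. -/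
lemma finite_not_isUnit (T : V →L[ℂ] V) : {z : ℂ | ¬ IsUnit (1 + z • (T - 1))}.Finite := by
  have hfin : (spectrum ℂ (T - 1)).Finite := by
    have := Module.End.finite_spectrum ((Module.End.toContinuousLinearMap V).symm (T - 1))
    rwa [AlgEquiv.spectrum_eq] at this
  refine (hfin.image fun c => -c⁻¹).subset fun z hz => ?_
  have hz0 : z ≠ 0 := by
    rintro rfl
    simp at hz
  refine ⟨-z⁻¹, ?_, by simp⟩
  intro hu
  apply hz
  have h2 : (1 : V →L[ℂ] V) + z • (T - 1) =
      (-z) • (algebraMap ℂ (V →L[ℂ] V) (-z⁻¹) - (T - 1)) := by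
    rw [Algebra.algebraMap_eq_smul_one, smul_sub (-z), smul_smul, neg_mul_neg,
      mul_inv_cancel₀ hz0, one_smul, neg_smul, sub_neg_eq_add]
  rw [h2]
  exact (IsUnit.smul (Units.mk0 (-z) (neg_ne_zero.2 hz0)) hu : _)

lemma joined_of_quotIso (hF : DirectSum.IsInternal F)
    (hρF : ∀ (g : N₂) (j : ZMod m), (F j).map (ρ g) = F (g • j))
    {Ψ Ψ' : V →L[ℂ] V} (h : IsClutch ρ F Ψ) (h' : IsClutch ρ F Ψ') (hq : QuotIso ρ F Ψ Ψ') :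
    Joined (⟨Ψ, h⟩ : {Ψ : V →L[ℂ] V // IsClutch ρ F Ψ}) ⟨Ψ', h'⟩ := by
  obtain ⟨T, hTu, hTρ, hTF, hconj⟩ := exists_conj_of_quotIso hF hρF h h' hq
  have : CompleteSpace V := FiniteDimensional.complete ℂ V
  let A : ℂ → V →L[ℂ] V := fun z => 1 + z • (T - 1)
  have hA : Continuous A := by fun_prop
  let f : ℂ → V →L[ℂ] V := fun z => Ring.inverse (A z) * Ψ' * A z
  have hpc : IsPathConnected {z : ℂ | ¬ IsUnit (A z)}ᶜ :=
    (finite_not_isUnit T).countable.isPathConnected_compl_of_one_lt_rank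
      (by rw [Complex.rank_real_complex]; norm_num)
  have hA0 : A 0 = 1 := by simp [A]
  have hA1 : A 1 = T := by simp [A]
  have h1 : JoinedIn {z : ℂ | ¬ IsUnit (A z)}ᶜ 1 0 :=
    hpc.joinedIn _ (by simpa [hA1] using hTu) _ (by simp [hA0])
  have hf : ContinuousOn f {z : ℂ | ¬ IsUnit (A z)}ᶜ := by
    intro z hz
    obtain ⟨U, hU⟩ : IsUnit (A z) := not_not.1 hz
    have h2 : ContinuousAt (fun z => Ring.inverse (A z)) z := by
      refine ContinuousAt.comp (g := Ring.inverse) ?_ hA.continuousAt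
      rw [← hU]
      exact NormedRing.inverse_continuousAt U
    exact ((h2.mul continuousAt_const).mul hA.continuousAt).continuousWithinAt
  have h2 : JoinedIn {Φ : V →L[ℂ] V | IsClutch ρ F Φ} (f 1) (f 0) := by
    refine (h1.map_continuousOn hf).mono ?_
    rintro _ ⟨z, hz, rfl⟩
    obtain ⟨U, hU⟩ : IsUnit (A z) := not_not.1 hz
    have h3 : f z = (U⁻¹).1 * Ψ' * U.1 := by
      simp only [f, ← hU, Ring.inverse_unit]
    rw [Set.mem_ofPred_eq, h3]
    refine h'.conj U (fun g v => ?_) fun j u hu => ?_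
    · rw [hU]
      simp [A, hTρ]
    · rw [hU]
      exact add_mem hu ((F j).smul_mem z (sub_mem (hTF j u hu) hu))
  have hf0 : f 0 = Ψ' := by simp [f, hA0]
  have hf1 : f 1 = Ψ := by
    simp only [f, hA1]
    rw [mul_assoc, hconj, ← mul_assoc, Ring.inverse_mul_cancel _ hTu, one_mul]
  rw [hf0, hf1] at h2
  exact h2.joined_subtype

end Clutching

end Clutch

/-- Assume Condition F2 (`N₂` acts transitively on `x̄`, `m ≥ 2`) and
let `𝒜` be the space of equivariant pointwise clutching maps.  Then the map
`π₀(𝒜) → ext_{N₁}^{N₂}(F x̄₀)`, `[ψ] ↦ [F/ψ]`, is a well-defined bijection; concretely: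
(i) two maps `ψ, ψ'` in `𝒜` are joined by a path in `𝒜` iff `F/ψ ≅ F/ψ'` as
`N₂`-representations;
(ii) every `N₂`-representation `W` whose restriction to `N₁ = Stab(x̄₀)` is isomorphic to
`F x̄₀` is isomorphic to `F/ψ` for some `ψ ∈ 𝒜`;
(iii) in particular, `𝒜` is nonempty iff `F x̄₀` admits an `N₂`-extension. -/
theorem statement12 {m : ℕ} [NeZero m] (hm : 2 ≤ m)
    {N₂ : Type*} [Group N₂] [MulAction N₂ (ZMod m)]
    {V : Type*} [NormedAddCommGroup V] [NormedSpace ℂ V] [FiniteDimensional ℂ V]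
    (ρ : Representation ℂ N₂ V) (F : ZMod m → Submodule ℂ V)
    (hF : DirectSum.IsInternal F)
    (hρF : ∀ (g : N₂) (j : ZMod m), (F j).map (ρ g) = F (g • j))
    (htrans : MulAction.IsPretransitive N₂ (ZMod m)) :
    -- (i) well-definedness and injectivity of `[ψ] ↦ [F/ψ]`
    (∀ (Ψ Ψ' : V →L[ℂ] V) (hΨ : IsClutch ρ F Ψ) (hΨ' : IsClutch ρ F Ψ'),
      Joined (⟨Ψ, hΨ⟩ : {Ψ : V →L[ℂ] V // IsClutch ρ F Ψ}) ⟨Ψ', hΨ'⟩ ↔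
        QuotIso ρ F Ψ Ψ') ∧
    -- (ii) surjectivity: every `N₂`-extension of `F x̄₀` arises as some `F/ψ`
    (∀ (W : Type*) [AddCommGroup W] [Module ℂ W], ∀ σ : Representation ℂ N₂ W,
      (∃ e : V →ₗ[ℂ] W, Set.BijOn e (F (0 : ZMod m)) Set.univ ∧
        ∀ g ∈ MulAction.stabilizer N₂ (0 : ZMod m), ∀ u ∈ F (0 : ZMod m),
          e (ρ g u) = σ g (e u)) →
      ∃ Ψ : V →L[ℂ] V, IsClutch ρ F Ψ ∧
        ∃ σQ : Representation ℂ N₂ (V ⧸ clutchSub F Ψ),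
          (∀ (g : N₂) (v : V),
            σQ g ((clutchSub F Ψ).mkQ v) = (clutchSub F Ψ).mkQ (ρ g v)) ∧
          ∃ θ : W →ₗ[ℂ] V ⧸ clutchSub F Ψ, Function.Bijective θ ∧
            ∀ (g : N₂) (w : W), θ (σ g w) = σQ g (θ w)) ∧
    -- (iii) nonemptiness iff an `N₂`-extension of `F x̄₀` exists
    (Nonempty {Ψ : V →L[ℂ] V // IsClutch ρ F Ψ} ↔
      ∃ σ₀ : Representation ℂ N₂ ↥(F (0 : ZMod m)),
        ∃ e : ↥(F (0 : ZMod m)) →ₗ[ℂ] ↥(F (0 : ZMod m)), Function.Bijective e ∧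
          ∀ g ∈ MulAction.stabilizer N₂ (0 : ZMod m), ∀ u w : ↥(F (0 : ZMod m)),
            (w : V) = ρ g u → e w = σ₀ g (e u)) := by
  refine ⟨fun Ψ Ψ' hΨ hΨ' => ⟨quotIso_of_joined hF hρF, joined_of_quotIso hF hρF hΨ hΨ'⟩,
    ?_, ?_, ?_⟩
  · rintro W _ _ σ ⟨e, he, hee⟩
    exact exists_clutch_of_extension hF hρF htrans σ e he hee
  · rintro ⟨Ψ, hΨ⟩
    obtain ⟨σQ, hσQ⟩ := exists_quotRep hF hρF hΨ
    have hb := bijOn_mkQ hF hΨ 0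
    have hbij : Function.Bijective ((clutchSub F Ψ).mkQ.domRestrict (F 0)) := by
      constructor
      · rintro ⟨u, hu⟩ ⟨v, hv⟩ h
        exact Subtype.ext (hb.injOn hu hv h)
      · intro x
        obtain ⟨u, hu, rfl⟩ := hb.surjOn (Set.mem_univ x)
        exact ⟨⟨u, hu⟩, rfl⟩
    let E := LinearEquiv.ofBijective _ hbij
    refine ⟨{ toFun := fun g => E.symm.toLinearMap ∘ₗ σQ g ∘ₗ E.toLinearMap
              map_one' := by ext; simp
              map_mul' := fun g h => by ext; simp }, LinearMap.id, Function.bijective_id, ?_⟩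
    intro g _ u w hw
    change w = E.symm (σQ g (E u))
    rw [LinearEquiv.eq_symm_apply]
    change (clutchSub F Ψ).mkQ w = σQ g ((clutchSub F Ψ).mkQ u)
    rw [hσQ, hw]
  · rintro ⟨σ₀, e, he, hee⟩
    obtain ⟨e', he'⟩ := LinearMap.exists_extend e
    have hee' : ∀ u (hu : u ∈ F 0), e' u = e ⟨u, hu⟩ := fun u hu =>
      LinearMap.congr_fun he' ⟨u, hu⟩
    have hbij : Set.BijOn e' (F 0) Set.univ := by
      refine ⟨Set.mapsTo_univ _ _, fun u hu v hv huv => ?_, fun w _ => ?_⟩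
      · rw [hee' u hu, hee' v hv] at huv
        exact congrArg Subtype.val (he.1 huv)
      · obtain ⟨⟨u, hu⟩, rfl⟩ := he.2 w
        exact ⟨u, hu, hee' u hu⟩
    have heq : ∀ g ∈ MulAction.stabilizer N₂ (0 : ZMod m), ∀ u ∈ F (0 : ZMod m),
        e' (ρ g u) = σ₀ g (e' u) := by
      intro g hg u hu
      have hgu : ρ g u ∈ F 0 := by
        have := rho_mem hρF g hu
        rwa [MulAction.mem_stabilizer_iff.1 hg] at this
      rw [hee' _ hgu, hee' u hu]
      exact hee g hg ⟨u, hu⟩ ⟨_, hgu⟩ rfl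
    obtain ⟨Ψ, hΨ, -⟩ := exists_clutch_of_extension hF hρF htrans σ₀ e' hbij heq
    exact ⟨⟨Ψ, hΨ⟩⟩
end
end

section
/- Assume N₂ = ⟨N₀, a₀⟩ for some a₀ ∈ N₂ such that a₀·x̄_j = x̄_{j+1} for every j ∈ ℤ/m (so N₂/N₀ ≅ ℤ/m and N₁ = N₀). Then a pointwise preclutching map ψ with respect to F is an equivariant pointwise clutching map if and only if: ψ^m = id, ψ(x̄₀) is an N₀-equivariant isomorphism F_{x̄₀} → F_{x̄₁}, and ψ(x̄_j) = a₀^j ∘ ψ(x̄₀) ∘ a₀^{-j} for every j ∈ ℤ/m. -/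
/-! Setup: a group `N₂` acts on the finite set `x̄ = {x̄_j : j ∈ ℤ/m}`, modelled as a
`MulAction` of `N₂` on `ZMod m`.  An `N₂`-vector bundle `F` over `x̄` is modelled as a
finite-dimensional complex vector space `V` together with a representation
`ρ : N₂ →* End(V)` and a family of submodules `F j ⊆ V` (the fibers) forming an internal
direct sum decomposition of `V` with `ρ g (F j) = F (g • j)`.  A pointwise preclutching
map, i.e. a family of linear isomorphisms `ψ(x̄_j) : F j → F (j+1)`, is modelled as a
single continuous linear map `Ψ : V → V` restricting to a bijection `F j → F (j+1)` on
each fiber.  For `u ∈ F j`, the iterate `ψ^k u` is then just `Ψ^k u`. -/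

noncomputable section
open Function Set

open Clutch

/-! Since `N₂` is generated by the kernel `N₀` and `a₀`, every `g ∈ N₂` commutes with the shift
`j ↦ j + 1`, so `j₃ = j₁ + 1` in the clutching condition (`smul_add_one_of_gen`). The exponent
`j₃ - j₁` is then `1`, and the condition says exactly that `Ψ` commutes with `ρ g` on every fiber
for every `g`. The elements with this property are closed under products and inverses, so it
suffices to check them on the generators. For `n ∈ N₀` one conjugates by `a₀ ^ j` and uses that
`N₀` is normal; for `a₀` the formula for `ψ(x̄_j)` gives the claim at once, except when passing from
`x̄_{m-1}` to `x̄₀`, where `a₀ ^ m ∈ N₀` is used. -/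

/-- A group generated by the kernel of its action on `ℤ/m` and an element acting as the shift
acts by maps commuting with the shift. -/
lemma smul_add_one_of_gen {m : ℕ} {N₂ : Type*} [Group N₂] [MulAction N₂ (ZMod m)]
    (a₀ : N₂) (ha₀ : ∀ j : ZMod m, a₀ • j = j + 1)
    (hgen : Subgroup.closure
      (((MulAction.toPermHom N₂ (ZMod m)).ker : Subgroup N₂) ∪ {a₀} : Set N₂) = ⊤)
    (g : N₂) : ∀ j : ZMod m, g • (j + 1) = g • j + 1 := by
  have hg : g ∈ Subgroup.closure
      (((MulAction.toPermHom N₂ (ZMod m)).ker : Subgroup N₂) ∪ {a₀} : Set N₂) := by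
    rw [hgen]; trivial
  induction hg using Subgroup.closure_induction with
  | mem x hx =>
    intro j
    rcases hx with hx | hx
    · have h : ∀ i : ZMod m, x • i = i := fun i => by
        have := DFunLike.congr_fun (MonoidHom.mem_ker.mp hx) i
        simpa using this
      rw [h, h]
    · rw [Set.mem_singleton_iff.mp hx, ha₀, ha₀]
  | one => intro j; simp
  | mul x y _ _ hx hy => intro j; rw [mul_smul, mul_smul, hy, hx]
  | inv x _ hx =>
    intro j
    rw [inv_smul_eq_iff, hx, smul_inv_smul]

lemma pow_smul_of_shift {m : ℕ} {N₂ : Type*} [Group N₂] [MulAction N₂ (ZMod m)]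
    (a₀ : N₂) (ha₀ : ∀ j : ZMod m, a₀ • j = j + 1) (k : ℕ) (j : ZMod m) :
    a₀ ^ k • j = j + k := by
  induction k with
  | zero => simp
  | succ k ih => rw [pow_succ', mul_smul, ih, ha₀]; push_cast; ring

/-- Assume `N₂ = ⟨N₀, a₀⟩` where `N₀` is the kernel of the action and
`a₀ • x̄_j = x̄_{j+1}` for all `j`.  Then a pointwise preclutching map `ψ` with respect to
`F` is an equivariant pointwise clutching map iff `ψ^m = id`, `ψ(x̄₀)` is
`N₀`-equivariant, and `ψ(x̄_j) = a₀^j ∘ ψ(x̄₀) ∘ a₀^{-j}` for every `j ∈ ℤ/m`. -/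
theorem statement14 {m : ℕ} [NeZero m] (hm : 2 ≤ m)
    {N₂ : Type*} [Group N₂] [MulAction N₂ (ZMod m)]
    {V : Type*} [NormedAddCommGroup V] [NormedSpace ℂ V] [FiniteDimensional ℂ V]
    (ρ : Representation ℂ N₂ V) (F : ZMod m → Submodule ℂ V)
    (hF : DirectSum.IsInternal F)
    (hρF : ∀ (g : N₂) (j : ZMod m), (F j).map (ρ g) = F (g • j))
    (a₀ : N₂) (ha₀ : ∀ j : ZMod m, a₀ • j = j + 1)
    (hgen : Subgroup.closure
      (((MulAction.toPermHom N₂ (ZMod m)).ker : Subgroup N₂) ∪ {a₀} : Set N₂) = ⊤)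
    (Ψ : V →L[ℂ] V) (hΨ : IsPreclutch F Ψ) :
    IsClutch ρ F Ψ ↔
      ((∀ j : ZMod m, ∀ u ∈ F j, (Ψ ^ m) u = u) ∧
       (∀ g ∈ (MulAction.toPermHom N₂ (ZMod m)).ker, ∀ u ∈ F (0 : ZMod m),
          Ψ (ρ g u) = ρ g (Ψ u)) ∧
       (∀ j : ZMod m, ∀ u ∈ F j,
          Ψ u = ρ (a₀ ^ j.val) (Ψ (ρ (a₀ ^ j.val)⁻¹ u)))) := by
  have hmem : ∀ (g : N₂) {j : ZMod m} {u : V}, u ∈ F j → ρ g u ∈ F (g • j) := fun g j u hu => by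
    rw [← hρF]; exact Submodule.mem_map_of_mem hu
  have hmul : ∀ (g h : N₂) (u : V), ρ (g * h) u = ρ g (ρ h u) := fun g h u => by
    rw [map_mul]; rfl
  have hshift := smul_add_one_of_gen a₀ ha₀ hgen
  have hker : ∀ g ∈ (MulAction.toPermHom N₂ (ZMod m)).ker, ∀ j : ZMod m, g • j = j :=
    fun g hg j => by simpa using DFunLike.congr_fun (MonoidHom.mem_ker.mp hg) j
  -- The bound `2 ≤ m` makes the canonical representative of `1 : ZMod m` equal to `1`.
  have hexp : ∀ (g : N₂) (j : ZMod m), (g • (g⁻¹ • j + 1) - j : ZMod m).val = 1 := by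
    intro g j
    have : Fact (1 < m) := ⟨hm⟩
    rw [hshift, smul_inv_smul, add_sub_cancel_left, ZMod.val_one]
  have hback : ∀ (j : ZMod m) {u : V}, u ∈ F j → ρ (a₀ ^ j.val)⁻¹ u ∈ F 0 := by
    intro j u hu
    have h := hmem (a₀ ^ j.val)⁻¹ hu
    have h0 : (a₀ ^ j.val)⁻¹ • j = 0 := by
      rw [inv_smul_eq_iff, pow_smul_of_shift a₀ ha₀, zero_add, ZMod.natCast_zmod_val]
    rwa [h0] at h
  constructor
  · rintro ⟨-, h1, h2⟩
    have h3 : ∀ (g : N₂) (j : ZMod m), ∀ u ∈ F j, Ψ u = ρ g (Ψ (ρ g⁻¹ u)) := by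
      intro g j u hu
      have h := h2 g j u hu
      rwa [hexp, pow_one] at h
    refine ⟨h1, fun g hg u hu => ?_, fun j u hu => h3 _ j u hu⟩
    rw [h3 g _ _ (hmem g hu), ρ.inv_self_apply]
  · rintro ⟨h1, hN, ha⟩
    have hcomm : ∀ (g : N₂) (j : ZMod m), ∀ u ∈ F j, Ψ (ρ g u) = ρ g (Ψ u) := by
      intro g
      have hg : g ∈ Subgroup.closure
          (((MulAction.toPermHom N₂ (ZMod m)).ker : Subgroup N₂) ∪ {a₀} : Set N₂) := by
        rw [hgen]; trivial
      induction hg using Subgroup.closure_induction with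
      | mem x hx =>
        intro j u hu
        rcases hx with hx | hx
        · have hxu := hmem x hu
          rw [hker x hx] at hxu
          have hn := (MonoidHom.normal_ker (MulAction.toPermHom N₂ (ZMod m))).conj_mem
            x hx (a₀ ^ j.val)⁻¹
          have e := hN _ hn _ (hback j hu)
          rw [ha j _ hxu, ha j u hu, ← hmul x, ← hmul _ x]
          rw [← hmul] at e
          have e1 : (a₀ ^ j.val)⁻¹ * x * (a₀ ^ j.val)⁻¹⁻¹ * (a₀ ^ j.val)⁻¹
              = (a₀ ^ j.val)⁻¹ * x := by group
          rw [e1] at e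
          rw [e, ← hmul]
          congr 2
          group
        · rw [Set.mem_singleton_iff] at hx
          subst hx
          have hxu := hmem x hu
          rw [ha₀] at hxu
          have hstep : ρ x (Ψ u) =
              ρ (x ^ (j.val + 1)) (Ψ (ρ (x ^ (j.val + 1))⁻¹ (ρ x u))) := by
            rw [ha j u hu, ← hmul, ← hmul, pow_succ']
            congr 4
            group
          rw [hstep]
          by_cases hj : j.val + 1 = m
          · have hj0 : j + 1 = 0 := by
              have h : ((j.val + 1 : ℕ) : ZMod m) = 0 := by rw [hj]; simp
              simpa using h
            rw [hj0] at hxu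
            have hm' : x ^ m ∈ (MulAction.toPermHom N₂ (ZMod m)).ker := by
              rw [MonoidHom.mem_ker]
              ext1 i
              simpa using pow_smul_of_shift x ha₀ m i
            rw [hj, hN _ (inv_mem hm') _ hxu, ρ.self_inv_apply]
          · have hv : (j + 1).val = j.val + 1 := by
              have hlt := j.val_lt
              have h : ((j.val + 1 : ℕ) : ZMod m) = j + 1 := by simp
              rw [← h, ZMod.val_natCast, Nat.mod_eq_of_lt (by omega)]
            have h := ha (j + 1) _ hxu
            rwa [hv] at h
      | one => intro j u hu; simp
      | mul x y _ _ hx hy =>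
        intro j u hu
        rw [hmul, hmul, hx _ _ (hmem y hu), hy j u hu]
      | inv x _ hx =>
        intro j u hu
        have h := hx _ _ (hmem x⁻¹ hu)
        rw [ρ.self_inv_apply] at h
        rw [h, ρ.inv_self_apply]
    refine ⟨hΨ, h1, fun g j u hu => ?_⟩
    rw [hexp, pow_one, ← hcomm g _ _ (hmem g⁻¹ hu), ρ.self_inv_apply]
end
end
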